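/- arXiv:2601.07535 — 2 statements merged into one kernel-verified Lean document; each statement's English description precedes it below -/
import Mathlib

section
/- (Lemma A.5: true-variance two-sample bound on the MMD.) Let 𝒳 be a measurable space, H a real separable Hilbert space, and φ : 𝒳 → H a bounded measurable feature map; let g(x,y) := ⟨φ(x), φ(y)⟩ with supremum ḡ := sup_{x,y} g(x,y). Let ν_i, ν_j be probability measures on 𝒳 with KMEs μ_i, μ_j and RKHS variances 𝒱*_i := E_{X∼ν_i}[‖φ(X) − μ_i‖²], 𝒱*_j := E_{X∼ν_j}[‖φ(X) − μ_j‖²]. Let X^i_1,…,X^i_n and X^j_1,…,X^j_n be mutually independent with X^i_t ∼ ν_i and X^j_t ∼ ν_j i.i.d., n ≥ 1, and define μ̂_i := (1/n)Σ_t φ(X^i_t), μ̂_j := (1/n)Σ_t φ(X^j_t). Then for every δ ∈ (0,1], with probability at least 1 − δ, | ‖μ̂_j − μ̂_i‖ − ‖μ_j − μ_i‖ | ≤ (√𝒱*_i + √𝒱*_j)·√(2·log(4/δ)/n) + (8/3)·√ḡ·log(4/δ)/n. -/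
open MeasureTheory ProbabilityTheory Finset

noncomputable section

/-- The kernel `g(x,y) = ⟪φ x, φ y⟫` associated with the feature map `φ`. -/
def kerG {𝒳 H : Type*} [NormedAddCommGroup H] [InnerProductSpace ℝ H]
    (φ : 𝒳 → H) (x y : 𝒳) : ℝ :=
  inner ℝ (φ x) (φ y)

/-- The supremum `ḡ = sup_{x,y} g(x,y)` of the kernel. -/
def kerSup {𝒳 H : Type*} [NormedAddCommGroup H] [InnerProductSpace ℝ H]
    (φ : 𝒳 → H) : ℝ :=
  ⨆ p : 𝒳 × 𝒳, kerG φ p.1 p.2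

/-- The kernel mean embedding `μ_ν = E_{X∼ν}[φ(X)]` (a Bochner integral). -/
def KME {𝒳 H : Type*} [MeasurableSpace 𝒳] [NormedAddCommGroup H] [InnerProductSpace ℝ H]
    (φ : 𝒳 → H) (ν : Measure 𝒳) : H :=
  ∫ x, φ x ∂ν

/-- The RKHS variance `𝒱*_ν = E_{X∼ν}[‖φ(X) − μ_ν‖²]`. -/
def Vstar {𝒳 H : Type*} [MeasurableSpace 𝒳] [NormedAddCommGroup H] [InnerProductSpace ℝ H]
    (φ : 𝒳 → H) (ν : Measure 𝒳) : ℝ :=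
  ∫ x, ‖φ x - KME φ ν‖ ^ 2 ∂ν

/-- The empirical kernel mean embedding `μ̂ = (1/n) Σ_{t<n} φ(x_t)`. -/
def empKME {𝒳 H : Type*} [NormedAddCommGroup H] [InnerProductSpace ℝ H]
    (φ : 𝒳 → H) (n : ℕ) (x : ℕ → 𝒳) : H :=
  (n : ℝ)⁻¹ • ∑ t ∈ range n, φ (x t)

/-!
The proof follows Pinelis. Since `x ↦ cosh √x` is a power series with nonnegative coefficients, it
is convex, so `cosh ‖x + y‖` is at most `cosh ‖x‖ (exp ‖y‖ - ‖y‖)` plus a term linear in `y`. For a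
centred `y` the linear term integrates to zero, and independence gives
`E cosh ‖∑ Yᵢ‖ ≤ ∏ E (exp ‖Yᵢ‖ - ‖Yᵢ‖)`. As `exp u - u ≤ 1 + u² / (2 (1 - u / 3))`, a Chernoff
argument yields Bernstein's inequality with a dimension-free factor `2`. Each sample deviates from
its mean embedding with probability at most `δ / 2`, and the triangle inequality concludes.
-/

lemma convexOn_cosh_sqrt : ConvexOn ℝ (Set.Ici 0) fun x ↦ Real.cosh √x := by
  have hasSum_cosh_sqrt {x : ℝ} (hx : 0 ≤ x) :
      HasSum (fun k : ℕ ↦ x ^ k / ((2 * k).factorial : ℝ)) (Real.cosh √x) := by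
    simpa only [pow_mul, Real.sq_sqrt hx] using Real.hasSum_cosh √x
  refine ⟨convex_Ici 0, fun x hx y hy a b ha hb hab ↦ ?_⟩
  refine hasSum_le (fun k ↦ ?_) (hasSum_cosh_sqrt (convex_Ici 0 hx hy ha hb hab))
    (((hasSum_cosh_sqrt hx).const_smul a).add ((hasSum_cosh_sqrt hy).const_smul b))
  have hpow := (convexOn_pow k).2 hx hy ha hb hab
  simp only [smul_eq_mul] at hpow ⊢
  rw [← mul_div_assoc, ← mul_div_assoc, ← add_div]
  gcongr

lemma exp_le_one_add_self_add_sq_div {u : ℝ} (hu : 0 ≤ u) (hu3 : u < 3) :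
    Real.exp u ≤ 1 + u + u ^ 2 / (2 * (1 - u / 3)) := by
  have hexp : HasSum (fun k : ℕ ↦ u ^ (k + 2) / ((k + 2).factorial : ℝ))
      (Real.exp u - (1 + u)) := by
    have hseries := NormedSpace.expSeries_div_hasSum_exp (𝔸 := ℝ) u
    rw [← Real.exp_eq_exp_ℝ] at hseries
    simpa [sum_range_succ] using (hasSum_nat_add_iff' 2).2 hseries
  have hgeom : HasSum (fun k : ℕ ↦ u ^ 2 / 2 * (u / 3) ^ k) (u ^ 2 / 2 * (1 - u / 3)⁻¹) :=
    (hasSum_geometric_of_lt_one (by positivity) (by linarith)).mul_left _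
  have hterm (k : ℕ) : u ^ (k + 2) / ((k + 2).factorial : ℝ) ≤ u ^ 2 / 2 * (u / 3) ^ k := by
    have hfactorial : (2 : ℝ) * 3 ^ k ≤ ((k + 2).factorial : ℝ) := by
      rw [add_comm k 2]
      exact_mod_cast Nat.factorial_mul_pow_le_factorial (m := 2) (n := k)
    calc u ^ (k + 2) / ((k + 2).factorial : ℝ) ≤ u ^ (k + 2) / (2 * 3 ^ k) := by gcongr
      _ = u ^ 2 / 2 * (u / 3) ^ k := by rw [div_pow, pow_add]; field_simp
  have hle := hasSum_le hterm hexp hgeom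
  rw [← div_eq_mul_inv, div_div] at hle
  linarith

-- The witness is `2 * L / (√(2 * v * L) + M * L)`; the more obvious choice with `2 / 3 * M * L` in
-- the denominator has `l * M = 3` when `v = 0`.
lemma exists_bernstein_exponent_le {v M L : ℝ} (hv : 0 ≤ v) (hM : 0 < M) (hL : 0 < L) :
    ∃ l, 0 ≤ l ∧ l * M < 3 ∧
      l ^ 2 * v / (2 * (1 - l * M / 3)) - l * (√(2 * v * L) + 2 / 3 * M * L) ≤ -L := by
  set r := √(2 * v * L)
  have hr : 0 ≤ r := Real.sqrt_nonneg _
  have hr_sq : r ^ 2 = 2 * v * L := Real.sq_sqrt (by positivity)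
  have : 0 < r + M * L := by positivity
  have hslack : 1 - 2 * L / (r + M * L) * M / 3 = (r + M * L / 3) / (r + M * L) := by
    field_simp
    ring
  refine ⟨2 * L / (r + M * L), by positivity, ?_, ?_⟩
  · have : 0 < (r + M * L / 3) / (r + M * L) := by positivity
    linarith
  · have hquad : (2 * L / (r + M * L)) ^ 2 * v / (2 * ((r + M * L / 3) / (r + M * L)))
        = L * r ^ 2 / ((r + M * L) * (r + M * L / 3)) := by
      rw [hr_sq]
      field_simp
    have hgap : L * r ^ 2 / ((r + M * L) * (r + M * L / 3))
          - 2 * L / (r + M * L) * (r + 2 / 3 * M * L) + L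
        = -(L * (2 * r * (M * L / 3) + (M * L / 3) ^ 2)) / ((r + M * L) * (r + M * L / 3)) := by
      field_simp
      ring
    have hgap_nonneg :
        0 ≤ L * (2 * r * (M * L / 3) + (M * L / 3) ^ 2) / ((r + M * L) * (r + M * L / 3)) := by
      positivity
    rw [hslack, hquad]
    rw [neg_div] at hgap
    linarith

lemma integral_exp_norm_sub_norm_le {Ω E : Type*} [MeasurableSpace Ω] {P : Measure Ω}
    [IsProbabilityMeasure P] [NormedAddCommGroup E] {Y : Ω → E} (hY : AEStronglyMeasurable Y P)
    {B : ℝ} (hB : B < 3) (hYB : ∀ᵐ ω ∂P, ‖Y ω‖ ≤ B) :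
    ∫ ω, (Real.exp ‖Y ω‖ - ‖Y ω‖) ∂P
      ≤ Real.exp ((∫ ω, ‖Y ω‖ ^ 2 ∂P) / (2 * (1 - B / 3))) := by
  have hint : Integrable (fun ω ↦ ‖Y ω‖ ^ 2) P := (MemLp.of_bound hY B hYB).integrable_norm_pow'
  calc ∫ ω, (Real.exp ‖Y ω‖ - ‖Y ω‖) ∂P
      ≤ ∫ ω, (1 + ‖Y ω‖ ^ 2 / (2 * (1 - B / 3))) ∂P := by
        refine integral_mono_of_nonneg
          (.of_forall fun ω ↦ by simp only [Pi.zero_apply]; linarith [Real.add_one_le_exp ‖Y ω‖])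
          ((integrable_const 1).add (hint.div_const _)) ?_
        filter_upwards [hYB] with ω hω
        have hexp := exp_le_one_add_self_add_sq_div (norm_nonneg (Y ω)) (hω.trans_lt hB)
        have hdenom : ‖Y ω‖ ^ 2 / (2 * (1 - ‖Y ω‖ / 3)) ≤ ‖Y ω‖ ^ 2 / (2 * (1 - B / 3)) := by
          have : 0 < 1 - B / 3 := by linarith
          gcongr
        linarith
    _ = (∫ ω, ‖Y ω‖ ^ 2 ∂P) / (2 * (1 - B / 3)) + 1 := by
        rw [integral_add (integrable_const 1) (hint.div_const _), integral_div, add_comm]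
        simp
    _ ≤ _ := Real.add_one_le_exp _

lemma measure_ge_le_two_mul_exp_neg_mul_lintegral_cosh {Ω : Type*} [MeasurableSpace Ω]
    {P : Measure Ω} {f : Ω → ℝ} (hf : AEMeasurable f P) (x : ℝ) :
    P {ω | x ≤ f ω}
      ≤ ENNReal.ofReal (2 * Real.exp (-x)) * ∫⁻ ω, ENNReal.ofReal (Real.cosh (f ω)) ∂P := by
  have hpos : 0 < Real.exp x / 2 := by positivity
  have hcosh : AEMeasurable (fun ω ↦ ENNReal.ofReal (Real.cosh (f ω))) P :=
    (Real.continuous_cosh.measurable.comp_aemeasurable hf).ennreal_ofReal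
  calc P {ω | x ≤ f ω}
      ≤ P {ω | ENNReal.ofReal (Real.exp x / 2) ≤ ENNReal.ofReal (Real.cosh (f ω))} := by
        refine measure_mono fun ω (hω : x ≤ f ω) ↦ ENNReal.ofReal_le_ofReal ?_
        rw [Real.cosh_eq]
        linarith [Real.exp_le_exp.2 hω, Real.exp_pos (-f ω)]
    _ ≤ (∫⁻ ω, ENNReal.ofReal (Real.cosh (f ω)) ∂P) / ENNReal.ofReal (Real.exp x / 2) :=
        meas_ge_le_lintegral_div hcosh (by simpa using hpos) ENNReal.ofReal_ne_top
    _ = _ := by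
        rw [ENNReal.div_eq_inv_mul, ← ENNReal.ofReal_inv_of_pos hpos, inv_div, Real.exp_neg,
          div_eq_mul_inv]

section Pinelis

variable {ι Ω H : Type*} [MeasurableSpace Ω] {P : Measure Ω}
  [NormedAddCommGroup H] [InnerProductSpace ℝ H]

-- `‖x + y‖²` is the convex combination of `(‖x‖ ± ‖y‖)²` with weights `(1 ± cos ∠(x, y)) / 2`.
lemma cosh_norm_add_le_cosh_mul_cosh_add (x y : H) :
    Real.cosh ‖x + y‖ ≤ Real.cosh ‖x‖ * Real.cosh ‖y‖
      + Real.cos (InnerProductGeometry.angle x y) * (Real.sinh ‖x‖ * Real.sinh ‖y‖) := by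
  set c := Real.cos (InnerProductGeometry.angle x y) with hc
  have hc_lower : -1 ≤ c := Real.neg_one_le_cos _
  have hc_upper : c ≤ 1 := Real.cos_le_one _
  have hsq : ‖x + y‖ ^ 2
      = (1 + c) / 2 * (‖x‖ + ‖y‖) ^ 2 + (1 - c) / 2 * (‖x‖ - ‖y‖) ^ 2 := by
    rw [norm_add_sq_real, ← InnerProductGeometry.cos_angle_mul_norm_mul_norm, ← hc]
    ring
  have hconv := convexOn_cosh_sqrt.2 (Set.mem_Ici.2 (sq_nonneg (‖x‖ + ‖y‖)))
    (Set.mem_Ici.2 (sq_nonneg (‖x‖ - ‖y‖))) (show 0 ≤ (1 + c) / 2 by linarith)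
    (show 0 ≤ (1 - c) / 2 by linarith) (by ring)
  simp only [smul_eq_mul, ← hsq, Real.sqrt_sq_eq_abs, Real.cosh_abs] at hconv
  rw [Real.cosh_add, Real.cosh_sub] at hconv
  linarith

lemma cosh_norm_add_le (x y : H) :
    Real.cosh ‖x + y‖ ≤ Real.cosh ‖x‖ * (Real.exp ‖y‖ - ‖y‖)
      + Real.sinh ‖x‖ / ‖x‖ * inner ℝ x y := by
  set c := Real.cos (InnerProductGeometry.angle x y) with hc
  have hlinear : Real.sinh ‖x‖ / ‖x‖ * inner ℝ x y = c * (Real.sinh ‖x‖ * ‖y‖) := by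
    rw [← InnerProductGeometry.cos_angle_mul_norm_mul_norm, ← hc]
    rcases eq_or_ne ‖x‖ 0 with hx | hx
    · simp [hx]
    · field_simp
  have hsinh : ‖y‖ ≤ Real.sinh ‖y‖ := Real.self_le_sinh_iff.2 (norm_nonneg y)
  have hcosh : c * Real.sinh ‖x‖ ≤ Real.cosh ‖x‖ :=
    (mul_le_of_le_one_left (Real.sinh_nonneg_iff.2 (norm_nonneg x)) (Real.cos_le_one _)).trans
      (Real.sinh_lt_cosh ‖x‖).le
  have hdefect := mul_nonneg (sub_nonneg.2 hcosh) (sub_nonneg.2 hsinh)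
  have hadd := cosh_norm_add_le_cosh_mul_cosh_add x y
  rw [hlinear, ← Real.cosh_add_sinh ‖y‖]
  linarith

lemma lintegral_cosh_norm_add_le [CompleteSpace H] {Y : Ω → H} (hY : AEStronglyMeasurable Y P)
    (hexp : Integrable (fun ω ↦ Real.exp ‖Y ω‖) P) (hmean : ∫ ω, Y ω ∂P = 0) (x : H) :
    ∫⁻ ω, ENNReal.ofReal (Real.cosh ‖x + Y ω‖) ∂P
      ≤ ENNReal.ofReal (Real.cosh ‖x‖) * ENNReal.ofReal (∫ ω, (Real.exp ‖Y ω‖ - ‖Y ω‖) ∂P) := by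
  have hint : Integrable Y P :=
    hexp.mono' hY (.of_forall fun ω ↦ by linarith [Real.add_one_le_exp ‖Y ω‖])
  have hint_growth : Integrable (fun ω ↦ Real.cosh ‖x‖ * (Real.exp ‖Y ω‖ - ‖Y ω‖)) P :=
    (hexp.sub hint.norm).const_mul _
  have hint_linear : Integrable (fun ω ↦ Real.sinh ‖x‖ / ‖x‖ * inner ℝ x (Y ω)) P :=
    (hint.const_inner x).const_mul _
  calc ∫⁻ ω, ENNReal.ofReal (Real.cosh ‖x + Y ω‖) ∂P
      ≤ ∫⁻ ω, ENNReal.ofReal (Real.cosh ‖x‖ * (Real.exp ‖Y ω‖ - ‖Y ω‖)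
          + Real.sinh ‖x‖ / ‖x‖ * inner ℝ x (Y ω)) ∂P :=
        lintegral_mono fun ω ↦ ENNReal.ofReal_le_ofReal (cosh_norm_add_le x (Y ω))
    _ = ENNReal.ofReal (∫ ω, (Real.cosh ‖x‖ * (Real.exp ‖Y ω‖ - ‖Y ω‖)
          + Real.sinh ‖x‖ / ‖x‖ * inner ℝ x (Y ω)) ∂P) :=
        (ofReal_integral_eq_lintegral_ofReal (hint_growth.add hint_linear)
          (.of_forall fun ω ↦ (Real.cosh_pos _).le.trans (cosh_norm_add_le x (Y ω)))).symm
    _ = ENNReal.ofReal (Real.cosh ‖x‖ * ∫ ω, (Real.exp ‖Y ω‖ - ‖Y ω‖) ∂P) := by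
        rw [integral_add hint_growth hint_linear, integral_const_mul, integral_const_mul,
          integral_inner hint, hmean, inner_zero_right, mul_zero, add_zero]
    _ = _ := ENNReal.ofReal_mul (Real.cosh_pos _).le

variable [CompleteSpace H] [SecondCountableTopology H] [MeasurableSpace H] [BorelSpace H]

lemma lintegral_cosh_norm_sum_le {Y : ι → Ω → H} (hindep : iIndepFun Y P)
    (hY : ∀ i, AEMeasurable (Y i) P) (hexp : ∀ i, Integrable (fun ω ↦ Real.exp ‖Y i ω‖) P)
    (hmean : ∀ i, ∫ ω, Y i ω ∂P = 0) (s : Finset ι) :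
    ∫⁻ ω, ENNReal.ofReal (Real.cosh ‖∑ i ∈ s, Y i ω‖) ∂P
      ≤ ∏ i ∈ s, ENNReal.ofReal (∫ ω, (Real.exp ‖Y i ω‖ - ‖Y i ω‖) ∂P) := by
  have := hindep.isProbabilityMeasure
  have hcosh : Measurable fun x : H ↦ ENNReal.ofReal (Real.cosh ‖x‖) :=
    (Real.continuous_cosh.comp continuous_norm).measurable.ennreal_ofReal
  induction s using Finset.cons_induction with
  | empty => simp
  | cons i s hi ih =>
    set S : Ω → H := ∑ j ∈ s, Y j
    have hS_apply (ω : Ω) : S ω = ∑ j ∈ s, Y j ω := Finset.sum_apply ω s Y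
    have hS_meas : AEMeasurable S P := Finset.aemeasurable_sum s fun j _ ↦ hY j
    have hS_indep : IndepFun S (Y i) P := hindep.indepFun_finsetSum_of_notMem₀ hY hi
    simp only [← hS_apply] at ih
    calc ∫⁻ ω, ENNReal.ofReal (Real.cosh ‖∑ j ∈ cons i s hi, Y j ω‖) ∂P
        = ∫⁻ z, ENNReal.ofReal (Real.cosh ‖z‖) ∂P.map (S + Y i) := by
          rw [lintegral_map' hcosh.aemeasurable (hS_meas.add (hY i))]
          simp only [sum_cons, Pi.add_apply, hS_apply, add_comm]
      _ = ∫⁻ ω, ∫⁻ ω', ENNReal.ofReal (Real.cosh ‖S ω + Y i ω'‖) ∂P ∂P := by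
          rw [hS_indep.map_add_eq_map_conv_map₀ hS_meas (hY i), Measure.lintegral_conv hcosh,
            lintegral_map' (by fun_prop) hS_meas]
          exact lintegral_congr fun ω ↦ lintegral_map' (by fun_prop) (hY i)
      _ ≤ ∫⁻ ω, ENNReal.ofReal (Real.cosh ‖S ω‖)
            * ENNReal.ofReal (∫ ω', (Real.exp ‖Y i ω'‖ - ‖Y i ω'‖) ∂P) ∂P :=
          lintegral_mono fun ω ↦ lintegral_cosh_norm_add_le (hY i).aestronglyMeasurable
            (hexp i) (hmean i) (S ω)
      _ = (∫⁻ ω, ENNReal.ofReal (Real.cosh ‖S ω‖) ∂P)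
            * ENNReal.ofReal (∫ ω, (Real.exp ‖Y i ω‖ - ‖Y i ω‖) ∂P) :=
          lintegral_mul_const'' _ (hcosh.comp_aemeasurable hS_meas)
      _ ≤ _ := by
          rw [prod_cons, mul_comm]
          gcongr

lemma lintegral_cosh_norm_sum_le_exp {Y : ι → Ω → H} (hindep : iIndepFun Y P)
    (hY : ∀ i, AEMeasurable (Y i) P) (hmean : ∀ i, ∫ ω, Y i ω ∂P = 0)
    {B : ℝ} (hB : B < 3) (hYB : ∀ i, ∀ᵐ ω ∂P, ‖Y i ω‖ ≤ B) (s : Finset ι) :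
    ∫⁻ ω, ENNReal.ofReal (Real.cosh ‖∑ i ∈ s, Y i ω‖) ∂P
      ≤ ENNReal.ofReal (Real.exp ((∑ i ∈ s, ∫ ω, ‖Y i ω‖ ^ 2 ∂P) / (2 * (1 - B / 3)))) := by
  have := hindep.isProbabilityMeasure
  have hexp (i : ι) : Integrable (fun ω ↦ Real.exp ‖Y i ω‖) P := by
    refine .of_bound (hY i).norm.exp.aestronglyMeasurable (Real.exp B) ?_
    filter_upwards [hYB i] with ω hω
    simpa using hω
  refine (lintegral_cosh_norm_sum_le hindep hY hexp hmean s).trans ?_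
  rw [sum_div, Real.exp_sum, ENNReal.ofReal_prod_of_nonneg fun i _ ↦ (Real.exp_pos _).le]
  gcongr with i
  exact integral_exp_norm_sub_norm_le (hY i).aestronglyMeasurable hB (hYB i)

lemma measure_le_norm_sum_le_two_mul_exp {Y : ι → Ω → H} (hindep : iIndepFun Y P)
    (hY : ∀ i, AEMeasurable (Y i) P) (hmean : ∀ i, ∫ ω, Y i ω ∂P = 0)
    {M : ℝ} (hYM : ∀ i, ∀ᵐ ω ∂P, ‖Y i ω‖ ≤ M) (s : Finset ι)
    {l : ℝ} (hl : 0 ≤ l) (hlM : l * M < 3) (x : ℝ) :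
    P {ω | x ≤ ‖∑ i ∈ s, Y i ω‖} ≤ ENNReal.ofReal (2 * Real.exp
      (l ^ 2 * (∑ i ∈ s, ∫ ω, ‖Y i ω‖ ^ 2 ∂P) / (2 * (1 - l * M / 3)) - l * x)) := by
  have hscaled := lintegral_cosh_norm_sum_le_exp (Y := fun i ω ↦ l • Y i ω)
    (hindep.comp (fun _ y ↦ l • y) fun _ ↦ measurable_const_smul l)
    (fun i ↦ (hY i).const_smul l) (fun i ↦ by rw [integral_smul, hmean, smul_zero]) hlM
    (fun i ↦ by
      filter_upwards [hYM i] with ω hω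
      rw [norm_smul, Real.norm_of_nonneg hl]
      gcongr) s
  simp only [← smul_sum, norm_smul, Real.norm_of_nonneg hl, mul_pow, integral_const_mul,
    ← mul_sum] at hscaled
  have hnorm : AEMeasurable (fun ω ↦ l * ‖∑ i ∈ s, Y i ω‖) P :=
    (Finset.aemeasurable_fun_sum s fun i _ ↦ hY i).norm.const_mul l
  calc P {ω | x ≤ ‖∑ i ∈ s, Y i ω‖}
      ≤ P {ω | l * x ≤ l * ‖∑ i ∈ s, Y i ω‖} :=
        measure_mono fun ω hω ↦ mul_le_mul_of_nonneg_left hω hl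
    _ ≤ _ := measure_ge_le_two_mul_exp_neg_mul_lintegral_cosh hnorm (l * x)
    _ ≤ _ := mul_le_mul_right hscaled _
    _ = _ := by
        rw [← ENNReal.ofReal_mul (by positivity), mul_assoc, ← Real.exp_add, neg_add_eq_sub]

lemma measure_lt_norm_sum_le_two_mul_exp_neg {Y : ι → Ω → H} (hindep : iIndepFun Y P)
    (hY : ∀ i, AEMeasurable (Y i) P) (hmean : ∀ i, ∫ ω, Y i ω ∂P = 0)
    {M : ℝ} (hM : 0 ≤ M) (hYM : ∀ i, ∀ᵐ ω ∂P, ‖Y i ω‖ ≤ M) (s : Finset ι)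
    {L : ℝ} (hL : 0 < L) :
    P {ω | √(2 * (∑ i ∈ s, ∫ ω', ‖Y i ω'‖ ^ 2 ∂P) * L) + 2 / 3 * M * L < ‖∑ i ∈ s, Y i ω‖}
      ≤ ENNReal.ofReal (2 * Real.exp (-L)) := by
  rcases hM.eq_or_lt with rfl | hM_pos
  · have hzero : ∀ᵐ ω ∂P, ∑ i ∈ s, Y i ω = 0 := by
      have hall := (Finset.eventually_all s).2 fun i _ ↦ hYM i
      filter_upwards [hall] with ω hω
      exact sum_eq_zero fun i hi ↦ norm_le_zero_iff.1 (hω i hi)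
    refine (measure_eq_zero_iff_ae_notMem.2 ?_).trans_le zero_le
    filter_upwards [hzero] with ω hω
    simp [hω]
  · obtain ⟨l, hl, hlM, hexponent⟩ := exists_bernstein_exponent_le
      (Finset.sum_nonneg fun i _ ↦ integral_nonneg fun ω ↦ sq_nonneg ‖Y i ω‖) hM_pos hL
    refine (measure_mono (Set.ofPred_subset_ofPred.2 fun ω ↦ le_of_lt)).trans
      ((measure_le_norm_sum_le_two_mul_exp hindep hY hmean hYM s hl hlM _).trans ?_)
    gcongr

lemma measure_lt_norm_average_le_two_mul_exp_neg {Y : ι → Ω → H} (hindep : iIndepFun Y P)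
    (hY : ∀ i, AEMeasurable (Y i) P) (hmean : ∀ i, ∫ ω, Y i ω ∂P = 0)
    {M V : ℝ} (hM : 0 ≤ M) (hYM : ∀ i, ∀ᵐ ω ∂P, ‖Y i ω‖ ≤ M)
    (hV : ∀ i, ∫ ω, ‖Y i ω‖ ^ 2 ∂P = V) {s : Finset ι} (hs : s.Nonempty) {L : ℝ} (hL : 0 < L) :
    P {ω | √V * √(2 * L / #s) + 2 / 3 * M * (L / #s) < ‖(#s : ℝ)⁻¹ • ∑ i ∈ s, Y i ω‖}
      ≤ ENNReal.ofReal (2 * Real.exp (-L)) := by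
  have hcard : (0 : ℝ) < #s := by exact_mod_cast hs.card_pos
  have hsqrt : √(2 * (#s * V) * L) = #s * (√V * √(2 * L / #s)) := by
    have hradicand : 2 * (#s * V) * L = (#s : ℝ) ^ 2 * (2 * L / #s) * V := by field_simp
    rw [hradicand, Real.sqrt_mul (by positivity), Real.sqrt_mul (by positivity),
      Real.sqrt_sq hcard.le]
    ring
  have hsum := measure_lt_norm_sum_le_two_mul_exp_neg hindep hY hmean hM hYM s hL
  simp only [hV, sum_const, nsmul_eq_mul, hsqrt] at hsum
  refine (measure_mono fun ω hω ↦ ?_).trans hsum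
  simp only [Set.mem_ofPred_eq, norm_smul, norm_inv, Real.norm_natCast] at hω ⊢
  rw [lt_inv_mul_iff₀ hcard] at hω
  refine lt_of_eq_of_lt ?_ hω
  field_simp

end Pinelis

lemma ofReal_one_sub_le_measure_of_measure_compl_le {Ω : Type*} [MeasurableSpace Ω]
    {P : Measure Ω} [IsProbabilityMeasure P] {G : Set Ω} {δ : ℝ} (hδ : 0 ≤ δ)
    (hG : P Gᶜ ≤ ENNReal.ofReal δ) : ENNReal.ofReal (1 - δ) ≤ P G := by
  rw [ENNReal.ofReal_sub 1 hδ, ENNReal.ofReal_one, tsub_le_iff_right, ← measure_univ (μ := P)]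
  exact (measure_univ_le_add_compl G).trans (by gcongr)

section KernelMeanEmbedding

variable {𝒳 H : Type*} [NormedAddCommGroup H] [InnerProductSpace ℝ H] {φ : 𝒳 → H}

lemma norm_le_sqrt_kerSup (hφ : ∃ C : ℝ, ∀ x, ‖φ x‖ ≤ C) (x : 𝒳) : ‖φ x‖ ≤ √(kerSup φ) := by
  obtain ⟨C, hC⟩ := hφ
  have hbdd : BddAbove (Set.range fun p : 𝒳 × 𝒳 ↦ kerG φ p.1 p.2) := by
    refine ⟨C * C, Set.forall_mem_range.2 fun p ↦ (real_inner_le_norm _ _).trans ?_⟩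
    have hC_nonneg : 0 ≤ C := (norm_nonneg _).trans (hC p.1)
    gcongr <;> apply hC
  refine Real.le_sqrt_of_sq_le ?_
  rw [← real_inner_self_eq_norm_sq]
  exact le_ciSup hbdd (x, x)

lemma empKME_sub {n : ℕ} (hn : 1 ≤ n) (x : ℕ → 𝒳) (h : H) :
    empKME φ n x - h = (n : ℝ)⁻¹ • ∑ t ∈ range n, (φ (x t) - h) := by
  have hn_ne : (n : ℝ) ≠ 0 := by positivity
  rw [sum_sub_distrib, sum_const, card_range, smul_sub, ← Nat.cast_smul_eq_nsmul ℝ,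
    inv_smul_smul₀ hn_ne, empKME]

variable [MeasurableSpace 𝒳] {ν : Measure 𝒳} [IsProbabilityMeasure ν]

lemma norm_sub_KME_le (hφ : ∃ C : ℝ, ∀ x, ‖φ x‖ ≤ C) (x : 𝒳) :
    ‖φ x - KME φ ν‖ ≤ 2 * √(kerSup φ) := by
  have hKME : ‖KME φ ν‖ ≤ √(kerSup φ) := by
    simpa [KME] using
      norm_integral_le_of_norm_le_const (μ := ν) (.of_forall (norm_le_sqrt_kerSup hφ))
  calc ‖φ x - KME φ ν‖ ≤ ‖φ x‖ + ‖KME φ ν‖ := norm_sub_le _ _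
    _ ≤ √(kerSup φ) + √(kerSup φ) := add_le_add (norm_le_sqrt_kerSup hφ x) hKME
    _ = 2 * √(kerSup φ) := (two_mul _).symm

lemma integral_sub_KME [CompleteSpace H] (φ : 𝒳 → H) : ∫ x, (φ x - KME φ ν) ∂ν = 0 := by
  simpa only [KME, average_eq_integral] using integral_sub_average ν φ

/-- The radius of the ball around `KME φ ν` that contains the empirical embedding of `n` samples
with probability at least `1 - 2 * exp (-L)`. -/
def kmeRadius (φ : 𝒳 → H) (ν : Measure 𝒳) (n : ℕ) (L : ℝ) : ℝ :=
  √(Vstar φ ν) * √(2 * L / n) + 4 / 3 * √(kerSup φ) * (L / n)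

lemma abs_norm_sub_sub_norm_KME_sub_KME_le {νi νj : Measure 𝒳} {n : ℕ} {L : ℝ} {a b : H}
    (ha : ‖a - KME φ νi‖ ≤ kmeRadius φ νi n L) (hb : ‖b - KME φ νj‖ ≤ kmeRadius φ νj n L) :
    |‖b - a‖ - ‖KME φ νj - KME φ νi‖|
      ≤ (√(Vstar φ νi) + √(Vstar φ νj)) * √(2 * L / n) + 8 / 3 * √(kerSup φ) * (L / n) :=
  calc |‖b - a‖ - ‖KME φ νj - KME φ νi‖|
      ≤ ‖b - KME φ νj‖ + ‖a - KME φ νi‖ := by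
        simpa only [dist_eq_norm, Real.norm_eq_abs] using
          dist_dist_dist_le b a (KME φ νj) (KME φ νi)
    _ ≤ kmeRadius φ νj n L + kmeRadius φ νi n L := add_le_add hb ha
    _ = _ := by
        rw [kmeRadius, kmeRadius]
        ring

variable {Ω : Type*} [MeasurableSpace Ω] {P : Measure Ω} [CompleteSpace H]
  [SecondCountableTopology H] [MeasurableSpace H] [BorelSpace H]

lemma measure_kmeRadius_lt_norm_empKME_sub_KME_le (hφmeas : Measurable φ)
    (hφbdd : ∃ C : ℝ, ∀ x, ‖φ x‖ ≤ C) {n : ℕ} (hn : 1 ≤ n) {X : ℕ → Ω → 𝒳}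
    (hX : ∀ t, HasLaw (X t) ν P) (hindep : iIndepFun X P) {L : ℝ} (hL : 0 < L) :
    P {ω | kmeRadius φ ν n L < ‖empKME φ n (fun t ↦ X t ω) - KME φ ν‖}
      ≤ ENNReal.ofReal (2 * Real.exp (-L)) := by
  have hcentred : Measurable fun x ↦ φ x - KME φ ν := hφmeas.sub_const _
  have hmean (t : ℕ) : ∫ ω, (φ (X t ω) - KME φ ν) ∂P = 0 :=
    ((hX t).integral_comp hcentred.aestronglyMeasurable).trans (integral_sub_KME φ)
  have hvariance (t : ℕ) : ∫ ω, ‖φ (X t ω) - KME φ ν‖ ^ 2 ∂P = Vstar φ ν :=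
    (hX t).integral_comp (hcentred.norm.pow_const 2).aestronglyMeasurable
  have hbernstein := measure_lt_norm_average_le_two_mul_exp_neg
    (Y := fun t ω ↦ φ (X t ω) - KME φ ν) (hindep.comp _ fun _ ↦ hcentred)
    (fun t ↦ hcentred.comp_aemeasurable (hX t).aemeasurable) hmean (by positivity)
    (fun t ↦ .of_forall fun ω ↦ norm_sub_KME_le hφbdd (X t ω)) hvariance
    (nonempty_range_iff.2 (Nat.one_le_iff_ne_zero.1 hn)) hL
  have hconst : 2 / 3 * (2 * √(kerSup φ)) = 4 / 3 * √(kerSup φ) := by ring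
  simpa only [kmeRadius, card_range, hconst, ← empKME_sub hn] using hbernstein

end KernelMeanEmbedding

theorem trueVariance_MMD_bound_general
    {𝒳 H Ω : Type*} [MeasurableSpace 𝒳]
    [NormedAddCommGroup H] [InnerProductSpace ℝ H] [CompleteSpace H]
    [SecondCountableTopology H] [MeasurableSpace H] [BorelSpace H] [MeasurableSpace Ω]
    (P : Measure Ω) [IsProbabilityMeasure P]
    (φ : 𝒳 → H) (hφmeas : Measurable φ) (hφbdd : ∃ C : ℝ, ∀ x : 𝒳, ‖φ x‖ ≤ C)
    (νi νj : Measure 𝒳) [IsProbabilityMeasure νi] [IsProbabilityMeasure νj]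
    (n : ℕ) (hn : 1 ≤ n) (Xi Xj : ℕ → Ω → 𝒳)
    (hXi : ∀ t, HasLaw (Xi t) νi P) (hXj : ∀ t, HasLaw (Xj t) νj P)
    (hindep_i : iIndepFun Xi P) (hindep_j : iIndepFun Xj P)
    (δ : ℝ) (hδ0 : 0 < δ) (hδ1 : δ ≤ 1) :
    ENNReal.ofReal (1 - δ) ≤
      P {ω | |‖empKME φ n (fun t => Xj t ω) - empKME φ n (fun t => Xi t ω)‖
              - ‖KME φ νj - KME φ νi‖|
          ≤ (√(Vstar φ νi) + √(Vstar φ νj)) * √(2 * Real.log (4 / δ) / n)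
            + (8 / 3) * √(kerSup φ) * (Real.log (4 / δ) / n)} := by
  set L := Real.log (4 / δ) with hL_def
  have hL : 0 < L := Real.log_pos (by rw [lt_div_iff₀ hδ0]; linarith)
  have hlevel : 2 * Real.exp (-L) = δ / 2 := by
    rw [hL_def, Real.exp_neg, Real.exp_log (by positivity)]
    field_simp
    norm_num
  have hi := measure_kmeRadius_lt_norm_empKME_sub_KME_le hφmeas hφbdd hn hXi hindep_i hL
  have hj := measure_kmeRadius_lt_norm_empKME_sub_KME_le hφmeas hφbdd hn hXj hindep_j hL
  refine ofReal_one_sub_le_measure_of_measure_compl_le hδ0.le ?_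
  calc _ ≤ P ({ω | kmeRadius φ νj n L < ‖empKME φ n (fun t ↦ Xj t ω) - KME φ νj‖}
          ∪ {ω | kmeRadius φ νi n L < ‖empKME φ n (fun t ↦ Xi t ω) - KME φ νi‖}) := by
        refine measure_mono fun ω hω ↦ ?_
        by_contra hclose
        simp only [Set.mem_union, Set.mem_ofPred_eq, not_or, not_lt] at hclose
        exact hω (abs_norm_sub_sub_norm_KME_sub_KME_le hclose.2 hclose.1)
    _ ≤ _ := (measure_union_le _ _).trans (add_le_add hj hi)
    _ = ENNReal.ofReal δ := by
        rw [hlevel, ← ENNReal.ofReal_add (by positivity) (by positivity), add_halves]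

/-- (Lemma A.5: true-variance two-sample bound on the MMD.) For mutually independent
i.i.d. samples `X^i_1,…,X^i_n ∼ ν_i` and `X^j_1,…,X^j_n ∼ ν_j`, with probability at
least `1 − δ`,
`| ‖μ̂_j − μ̂_i‖ − ‖μ_j − μ_i‖ | ≤ (√𝒱*_i + √𝒱*_j) √(2 log(4/δ)/n) + (8/3) √ḡ log(4/δ)/n`. -/
theorem trueVariance_MMD_bound
    {𝒳 H Ω : Type*} [MeasurableSpace 𝒳]
    [NormedAddCommGroup H] [InnerProductSpace ℝ H] [CompleteSpace H]
    [SecondCountableTopology H] [MeasurableSpace H] [BorelSpace H] [MeasurableSpace Ω]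
    (P : Measure Ω) [IsProbabilityMeasure P]
    (φ : 𝒳 → H) (hφmeas : Measurable φ) (hφbdd : ∃ C : ℝ, ∀ x : 𝒳, ‖φ x‖ ≤ C)
    (νi νj : Measure 𝒳) [IsProbabilityMeasure νi] [IsProbabilityMeasure νj]
    (n : ℕ) (hn : 1 ≤ n)
    (Xi Xj : ℕ → Ω → 𝒳)
    (hXimeas : ∀ t, Measurable (Xi t)) (hXjmeas : ∀ t, Measurable (Xj t))
    (hXilaw : ∀ t, Measure.map (Xi t) P = νi)
    (hXjlaw : ∀ t, Measure.map (Xj t) P = νj)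
    (hindep : iIndepFun (Sum.elim Xi Xj) P)
    (δ : ℝ) (hδ0 : 0 < δ) (hδ1 : δ ≤ 1) :
    ENNReal.ofReal (1 - δ) ≤
      P {ω | |‖empKME φ n (fun t => Xj t ω) - empKME φ n (fun t => Xi t ω)‖
              - ‖KME φ νj - KME φ νi‖|
          ≤ (Real.sqrt (Vstar φ νi) + Real.sqrt (Vstar φ νj))
              * Real.sqrt (2 * Real.log (4 / δ) / n)
            + (8 / 3) * Real.sqrt (kerSup φ) * (Real.log (4 / δ) / n)} := by
  exact trueVariance_MMD_bound_general P φ hφmeas hφbdd νi νj n hn Xi Xj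
    (fun t ↦ ⟨(hXimeas t).aemeasurable, hXilaw t⟩) (fun t ↦ ⟨(hXjmeas t).aemeasurable, hXjlaw t⟩)
    (hindep.precomp (g := Sum.inl) Sum.inl_injective)
    (hindep.precomp (g := Sum.inr) Sum.inr_injective) δ hδ0 hδ1

end
end

section
/- (Lemma A.6: concentration of the empirical RKHS standard deviation.) Let 𝒳 be a measurable additive group, H a real separable Hilbert space, and φ : 𝒳 → H a bounded measurable feature map; let g(x,y) := ⟨φ(x), φ(y)⟩ be translation invariant with range g̃ := sup g − inf g. Let ν be a probability measure on 𝒳 with KME μ_ν and RKHS variance 𝒱* := E_{X∼ν}[‖φ(X) − μ_ν‖²]. Let X_1,…,X_n be i.i.d. with law ν, n ≥ 2, and define 𝒱̂ := (1/(n−1)) Σ_{t=1}^n ( g(X_t,X_t) − (1/n)Σ_{s=1}^n g(X_t,X_s) ). Then for each b ∈ {−1, +1} and every δ ∈ (0,1], with probability at least 1 − δ, b·(√𝒱̂ − √𝒱*) ≤ 2·√(2·g̃·log(1/δ)/n). -/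
open MeasureTheory ProbabilityTheory Finset

noncomputable section

/-- The range `g̃ = sup_{x,y} g(x,y) − inf_{x,y} g(x,y)` of the kernel. -/
def kerRange {𝒳 H : Type*} [NormedAddCommGroup H] [InnerProductSpace ℝ H]
    (φ : 𝒳 → H) : ℝ :=
  (⨆ p : 𝒳 × 𝒳, kerG φ p.1 p.2) - (⨅ p : 𝒳 × 𝒳, kerG φ p.1 p.2)

/-- The empirical RKHS variance
`𝒱̂ = (1/(n−1)) Σ_{t<n} (g(x_t,x_t) − (1/n) Σ_{s<n} g(x_t,x_s))`. -/
def empVar {𝒳 H : Type*} [NormedAddCommGroup H] [InnerProductSpace ℝ H]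
    (φ : 𝒳 → H) (n : ℕ) (x : ℕ → 𝒳) : ℝ :=
  ((n : ℝ) - 1)⁻¹ * ∑ t ∈ range n,
    (kerG φ (x t) (x t) - (n : ℝ)⁻¹ * ∑ s ∈ range n, kerG φ (x t) (x s))

/-!
The empirical variance is the U-statistic of order two with kernel `‖φ x - φ y‖ ^ 2 / 2`, which
takes values in `[0, g̃]` and has mean `𝒱*`. Averaging over all permutations of the sample
(Hoeffding) exhibits it as an average of means of `m = ⌊n / 2⌋` independent kernel values, so that
by Jensen's inequality the moment-generating function of `m 𝒱̂ / g̃` is at most that of a Poisson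
variable with mean `m 𝒱* / g̃`. The square root of such a variable has Gaussian tails on both sides
with a variance proxy independent of the mean: this is Chernoff's bound with a parameter for which
the exponent is bounded by a perfect square. The resulting deviation `√(g̃ log (1 / δ) / m)` is
within the claim because `n ≤ 8 m`.
-/

open scoped BigOperators

section SubPoisson

variable {Ω : Type*} [MeasurableSpace Ω] {P : Measure Ω} {Y : Ω → ℝ} {r s : ℝ}

/-- `Y` has a sub-Poissonian moment-generating function with rate `r`: all its exponential moments
are finite and bounded by those of the Poisson law with mean `r`. -/
structure HasSubPoissonMGF (Y : Ω → ℝ) (r : ℝ) (P : Measure Ω) : Prop where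
  integrable_exp_mul : ∀ t : ℝ, Integrable (fun ω ↦ Real.exp (t * Y ω)) P
  mgf_le : ∀ t : ℝ, mgf Y P t ≤ Real.exp (r * (Real.exp t - 1))

theorem exp_mul_le_one_add_mul_exp_sub_one {x : ℝ} (hx : x ∈ Set.Icc 0 1) (t : ℝ) :
    Real.exp (t * x) ≤ 1 + x * (Real.exp t - 1) := by
  have chord := convexOn_exp.2 (Set.mem_univ 0) (Set.mem_univ t) (sub_nonneg.2 hx.2) hx.1
    (sub_add_cancel 1 x)
  simp only [smul_eq_mul, mul_zero, zero_add, Real.exp_zero] at chord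
  rw [mul_comm t]
  linarith

theorem hasSubPoissonMGF_of_mem_Icc [IsProbabilityMeasure P] (hYm : AEMeasurable Y P)
    (hY : ∀ᵐ ω ∂P, Y ω ∈ Set.Icc 0 1) : HasSubPoissonMGF Y (∫ ω, Y ω ∂P) P where
  integrable_exp_mul _ := integrable_exp_mul_of_mem_Icc hYm hY
  mgf_le t := by
    have hYint : Integrable Y P := .of_mem_Icc 0 1 hYm hY
    calc mgf Y P t
      _ ≤ ∫ ω, (1 + Y ω * (Real.exp t - 1)) ∂P :=
        integral_mono_ae (integrable_exp_mul_of_mem_Icc hYm hY)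
          ((integrable_const 1).add (hYint.mul_const _))
          (hY.mono fun ω hω ↦ exp_mul_le_one_add_mul_exp_sub_one hω t)
      _ = (∫ ω, Y ω ∂P) * (Real.exp t - 1) + 1 := by
        rw [integral_add (integrable_const 1) (hYint.mul_const _), integral_mul_const,
          integral_const, probReal_univ, one_smul, add_comm]
      _ ≤ Real.exp ((∫ ω, Y ω ∂P) * (Real.exp t - 1)) := Real.add_one_le_exp _

-- Chernoff's exponent for a Poisson variable of mean `w ^ 2` at the level `x ^ 2` is optimal at
-- `t = log (x ^ 2 / w ^ 2)`; half of this value is what makes a perfect square appear.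
theorem neg_log_div_mul_sq_add_le {x w : ℝ} (hx : 0 < x) (hw : 0 < w) :
    -Real.log (x / w) * x ^ 2 + w ^ 2 * (Real.exp (Real.log (x / w)) - 1) ≤ -(x - w) ^ 2 := by
  have hlog : x ^ 2 * (1 - (x / w)⁻¹) ≤ x ^ 2 * Real.log (x / w) := by
    gcongr
    exact Real.one_sub_inv_le_log_of_pos (by positivity)
  have hleft : x ^ 2 * (1 - (x / w)⁻¹) = x ^ 2 - x * w := by field_simp
  have hexp : w ^ 2 * (Real.exp (Real.log (x / w)) - 1) = x * w - w ^ 2 := by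
    rw [Real.exp_log (by positivity)]
    field_simp
  linarith

namespace HasSubPoissonMGF

theorem aemeasurable (hY : HasSubPoissonMGF Y r P) : AEMeasurable Y P := by
  simpa using Real.aemeasurable_of_aemeasurable_exp (hY.integrable_exp_mul 1).aemeasurable

theorem add_of_indepFun {Y₁ Y₂ : Ω → ℝ} {r₁ r₂ : ℝ} (hY₁ : HasSubPoissonMGF Y₁ r₁ P)
    (hY₂ : HasSubPoissonMGF Y₂ r₂ P) (hindep : IndepFun Y₁ Y₂ P) :
    HasSubPoissonMGF (Y₁ + Y₂) (r₁ + r₂) P where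
  integrable_exp_mul t :=
    hindep.integrable_exp_mul_add (hY₁.integrable_exp_mul t) (hY₂.integrable_exp_mul t)
  mgf_le t := by
    rw [hindep.mgf_add (hY₁.integrable_exp_mul t).1 (hY₂.integrable_exp_mul t).1, add_mul,
      Real.exp_add]
    exact mul_le_mul (hY₁.mgf_le t) (hY₂.mgf_le t) mgf_nonneg (Real.exp_pos _).le

theorem sum_of_iIndepFun {κ : Type*} {Y : κ → Ω → ℝ} {r : κ → ℝ}
    (hY : ∀ k, HasSubPoissonMGF (Y k) (r k) P) (hindep : iIndepFun Y P) (s : Finset κ) :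
    HasSubPoissonMGF (∑ k ∈ s, Y k) (∑ k ∈ s, r k) P := by
  classical
  have := hindep.isProbabilityMeasure
  induction s using Finset.induction_on with
  | empty => exact ⟨fun t ↦ by simp, fun t ↦ by simp⟩
  | insert k s hk ih =>
    rw [sum_insert hk, sum_insert hk]
    exact (hY k).add_of_indepFun ih
      (hindep.indepFun_finsetSum_of_notMem₀ (fun k ↦ (hY k).aemeasurable) hk).symm

theorem sum_convex_combination {κ : Type*} {Y : κ → Ω → ℝ} {w : κ → ℝ} {s : Finset κ}
    (hw0 : ∀ k ∈ s, 0 ≤ w k) (hw1 : ∑ k ∈ s, w k = 1)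
    (hY : ∀ k ∈ s, HasSubPoissonMGF (Y k) r P) :
    HasSubPoissonMGF (fun ω ↦ ∑ k ∈ s, w k * Y k ω) r P := by
  have jensen (t : ℝ) (ω : Ω) :
      Real.exp (t * ∑ k ∈ s, w k * Y k ω) ≤ ∑ k ∈ s, w k * Real.exp (t * Y k ω) := by
    have := convexOn_exp.map_sum_le (p := fun k ↦ t * Y k ω) hw0 hw1 fun _ _ ↦ Set.mem_univ _
    simpa only [smul_eq_mul, mul_left_comm, ← mul_sum] using this
  have hterm (t : ℝ) : ∀ k ∈ s, Integrable (fun ω ↦ w k * Real.exp (t * Y k ω)) P :=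
    fun k hk ↦ ((hY k hk).integrable_exp_mul t).const_mul _
  have hmeas : AEMeasurable (fun ω ↦ ∑ k ∈ s, w k * Y k ω) P :=
    s.aemeasurable_fun_sum fun k hk ↦ (hY k hk).aemeasurable.const_mul _
  have hint (t : ℝ) : Integrable (fun ω ↦ Real.exp (t * ∑ k ∈ s, w k * Y k ω)) P :=
    (integrable_finsetSum s (hterm t)).mono' (aemeasurable_exp_mul t hmeas)
      (ae_of_all _ fun ω ↦ by simpa only [Real.norm_eq_abs, Real.abs_exp] using jensen t ω)
  refine ⟨hint, fun t ↦ ?_⟩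
  calc mgf (fun ω ↦ ∑ k ∈ s, w k * Y k ω) P t
    _ ≤ ∫ ω, ∑ k ∈ s, w k * Real.exp (t * Y k ω) ∂P :=
      integral_mono (hint t) (integrable_finsetSum s (hterm t)) (jensen t)
    _ = ∑ k ∈ s, w k * mgf (Y k) P t := by
      rw [integral_finsetSum s (hterm t)]
      simp only [integral_const_mul, mgf]
    _ ≤ ∑ k ∈ s, w k * Real.exp (r * (Real.exp t - 1)) :=
      sum_le_sum fun k hk ↦ mul_le_mul_of_nonneg_left ((hY k hk).mgf_le t) (hw0 k hk)
    _ = Real.exp (r * (Real.exp t - 1)) := by rw [← sum_mul, hw1, one_mul]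

theorem expect {κ : Type*} {Y : κ → Ω → ℝ} {s : Finset κ} (hs : s.Nonempty)
    (hY : ∀ k ∈ s, HasSubPoissonMGF (Y k) r P) : HasSubPoissonMGF (fun ω ↦ 𝔼 k ∈ s, Y k ω) r P := by
  have hcard : (#s : ℝ) ≠ 0 := Nat.cast_ne_zero.2 hs.card_ne_zero
  have := sum_convex_combination (w := fun _ ↦ (#s : ℝ)⁻¹) (fun _ _ ↦ by positivity)
    (by simp [hcard]) hY
  simpa only [expect_eq_sum_div_card, div_eq_inv_mul, mul_sum] using this

variable [IsFiniteMeasure P]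

theorem measureReal_ge_le (hY : HasSubPoissonMGF Y r P) {t : ℝ} (ht : 0 ≤ t) (a : ℝ) :
    P.real {ω | a ≤ Y ω} ≤ Real.exp (-t * a + r * (Real.exp t - 1)) := by
  rw [Real.exp_add]
  exact (measure_ge_le_exp_mul_mgf a ht (hY.integrable_exp_mul t)).trans
    (mul_le_mul_of_nonneg_left (hY.mgf_le t) (Real.exp_pos _).le)

theorem measureReal_le_le (hY : HasSubPoissonMGF Y r P) {t : ℝ} (ht : t ≤ 0) (a : ℝ) :
    P.real {ω | Y ω ≤ a} ≤ Real.exp (-t * a + r * (Real.exp t - 1)) := by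
  rw [Real.exp_add]
  exact (measure_le_le_exp_mul_mgf a ht (hY.integrable_exp_mul t)).trans
    (mul_le_mul_of_nonneg_left (hY.mgf_le t) (Real.exp_pos _).le)

theorem measureReal_lt_sqrt_sub_sqrt_le (hY : HasSubPoissonMGF Y r P) (hr : 0 ≤ r) (hs : 0 ≤ s) :
    P.real {ω | s < √(Y ω) - √r} ≤ Real.exp (-s ^ 2) := by
  have hsub : {ω | s < √(Y ω) - √r} ⊆ {ω | (√r + s) ^ 2 ≤ Y ω} :=
    fun ω (hω : s < √(Y ω) - √r) ↦
      ((Real.lt_sqrt (by positivity)).1 (lt_sub_iff_add_lt'.1 hω)).le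
  refine (measureReal_mono hsub).trans ?_
  rcases hr.eq_or_lt with rfl | hr
  · refine (hY.measureReal_ge_le zero_le_one _).trans_eq ?_
    simp
  · have hw : 0 < √r := Real.sqrt_pos.2 hr
    have hlog : 0 ≤ Real.log ((√r + s) / √r) := Real.log_nonneg ((one_le_div hw).2 (by linarith))
    have hexponent := neg_log_div_mul_sq_add_le (by positivity : 0 < √r + s) hw
    rw [Real.sq_sqrt hr.le, add_sub_cancel_left] at hexponent
    exact (hY.measureReal_ge_le hlog _).trans (Real.exp_le_exp.2 hexponent)

theorem measureReal_lt_sqrt_rate_sub_sqrt_le (hY : HasSubPoissonMGF Y r P) (hs : 0 ≤ s) :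
    P.real {ω | s < √r - √(Y ω)} ≤ Real.exp (-s ^ 2) := by
  rcases le_or_gt √r s with hrs | hrs
  · have hempty : {ω | s < √r - √(Y ω)} = ∅ :=
      Set.eq_empty_of_forall_notMem fun ω (hω : s < √r - √(Y ω)) ↦ by
        linarith [Real.sqrt_nonneg (Y ω)]
    rw [hempty, measureReal_empty]
    positivity
  · have hw : 0 < √r := hs.trans_lt hrs
    have hsub : {ω | s < √r - √(Y ω)} ⊆ {ω | Y ω ≤ (√r - s) ^ 2} := fun ω (hω : s < √r - √(Y ω)) ↦
      (Real.sqrt_le_left (by linarith)).1 (by linarith)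
    have hlog : Real.log ((√r - s) / √r) ≤ 0 :=
      Real.log_nonpos (div_nonneg (by linarith) hw.le) ((div_le_one hw).2 (by linarith))
    have hexponent := neg_log_div_mul_sq_add_le (sub_pos.2 hrs) hw
    rw [Real.sq_sqrt (Real.sqrt_pos.1 hw).le, sub_sub_cancel_left, neg_sq] at hexponent
    exact (measureReal_mono hsub).trans
      ((hY.measureReal_le_le hlog _).trans (Real.exp_le_exp.2 hexponent))

theorem measureReal_lt_mul_sqrt_sub_sqrt_le (hY : HasSubPoissonMGF Y r P) (hr : 0 ≤ r)
    (hs : 0 ≤ s) {b : ℝ} (hb : b = 1 ∨ b = -1) :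
    P.real {ω | s < b * (√(Y ω) - √r)} ≤ Real.exp (-s ^ 2) := by
  rcases hb with rfl | rfl
  · simpa only [one_mul] using hY.measureReal_lt_sqrt_sub_sqrt_le hr hs
  · simpa only [neg_one_mul, neg_sub] using hY.measureReal_lt_sqrt_rate_sub_sqrt_le hs

theorem measureReal_sqrt_div_lt_mul_sqrt_sub_sqrt_le {c L b : ℝ}
    (hY : HasSubPoissonMGF (fun ω ↦ c * Y ω) (c * r) P) (hc : 0 < c) (hr : 0 ≤ r) (hL : 0 ≤ L)
    (hb : b = 1 ∨ b = -1) : P.real {ω | √(L / c) < b * (√(Y ω) - √r)} ≤ Real.exp (-L) := by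
  have hc' : 0 < √c := Real.sqrt_pos.2 hc
  have htail := hY.measureReal_lt_mul_sqrt_sub_sqrt_le (by positivity) (Real.sqrt_nonneg L) hb
  simpa only [Real.sq_sqrt hL, Real.sqrt_mul hc.le, ← mul_sub, mul_left_comm b,
    ← div_lt_iff₀' hc', ← Real.sqrt_div hL] using htail

end HasSubPoissonMGF

end SubPoisson

section UStatistic

theorem expect_smul_eq_expect {G α : Type*} [Group G] [Fintype G] [Fintype α] [MulAction G α]
    [MulAction.IsPretransitive G α] (f : α → ℝ) (a : α) : 𝔼 g : G, f (g • a) = 𝔼 x, f x := by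
  have hinv (x : α) : 𝔼 g : G, f (g • x) = 𝔼 g : G, f (g • a) := by
    obtain ⟨h, rfl⟩ := MulAction.exists_smul_eq G a x
    exact Fintype.expect_equiv (Equiv.mulRight h) _ _ fun g ↦ by simp [mul_smul]
  have : Nonempty α := ⟨a⟩
  calc 𝔼 g : G, f (g • a)
    _ = 𝔼 x, 𝔼 g : G, f (g • x) := by simp only [hinv, Fintype.expect_const]
    _ = 𝔼 g : G, 𝔼 x, f (g • x) := expect_comm ..
    _ = 𝔼 _g : G, 𝔼 x, f x :=
      expect_congr rfl fun g _ ↦ Fintype.expect_equiv (MulAction.toPerm g) _ _ fun _ ↦ rfl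
    _ = 𝔼 x, f x := Fintype.expect_const _

variable {𝒳 ι κ : Type*} [Fintype ι] {r : ℕ}

/-- The U-statistic of order `r` with kernel `h`, i.e. the average of `h` over all ordered
`r`-tuples of entries of `x` with pairwise distinct indices. The kernel need not be symmetric. -/
def uStatistic (h : (Fin r → 𝒳) → ℝ) (x : ι → 𝒳) : ℝ :=
  𝔼 e : Fin r ↪ ι, h (x ∘ e)

theorem expect_perm_comp_embedding [DecidableEq ι] (h : (Fin r → 𝒳) → ℝ) (x : ι → 𝒳)
    (e : Fin r ↪ ι) :
    𝔼 σ : Equiv.Perm ι, h (x ∘ σ ∘ e) = uStatistic h x :=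
  have := Equiv.Perm.isMultiplyPretransitive ι r
  expect_smul_eq_expect (G := Equiv.Perm ι) (fun e : Fin r ↪ ι ↦ h (x ∘ e)) e

theorem card_mul_uStatistic_eq_expect_sum [DecidableEq ι] [Fintype κ] (h : (Fin r → 𝒳) → ℝ)
    (x : ι → 𝒳) (c : κ × Fin r ↪ ι) :
    Fintype.card κ * uStatistic h x = 𝔼 σ : Equiv.Perm ι, ∑ k, h fun j ↦ x (σ (c (k, j))) := by
  have hblock (k : κ) : 𝔼 σ : Equiv.Perm ι, h (fun j ↦ x (σ (c (k, j)))) = uStatistic h x :=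
    expect_perm_comp_embedding h x ((Function.Embedding.sectR k (Fin r)).trans c)
  rw [expect_sum_comm]
  simp only [hblock, sum_const, card_univ, nsmul_eq_mul]

theorem uStatistic_const_mul (a : ℝ) (h : (Fin r → 𝒳) → ℝ) (x : ι → 𝒳) :
    uStatistic (fun z ↦ a * h z) x = a * uStatistic h x :=
  (mul_expect ..).symm

variable {Ω : Type*} [MeasurableSpace Ω] {P : Measure Ω} [MeasurableSpace 𝒳]

theorem iIndepFun_curry {β : Type*} {X : κ × β → Ω → 𝒳} (hX : ∀ p, Measurable (X p))
    (hindep : iIndepFun X P) : iIndepFun (fun k ω j ↦ X (k, j) ω) P := by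
  have := hindep.isProbabilityMeasure
  have (p : κ × β) : IsProbabilityMeasure (P.map (X p)) :=
    Measure.isProbabilityMeasure_map (hX p).aemeasurable
  have hrow (k : κ) : Measurable fun ω j ↦ X (k, j) ω := by fun_prop
  have hrow_law (k : κ) :
      P.map (fun ω j ↦ X (k, j) ω) = Measure.infinitePi fun j ↦ P.map (X (k, j)) :=
    (iIndepFun_iff_map_fun_eq_infinitePi_map fun j ↦ hX (k, j)).1
      (hindep.precomp (Prod.mk_right_injective k))
  rw [iIndepFun_iff_map_fun_eq_infinitePi_map hrow]
  simp only [hrow_law]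
  rw [← Measure.infinitePi_map_curry, ← (iIndepFun_iff_map_fun_eq_infinitePi_map hX).1 hindep,
    Measure.map_map (by fun_prop) (by fun_prop)]
  rfl

variable {X : ι → Ω → 𝒳} {h : (Fin r → 𝒳) → ℝ} {v M L : ℝ} {m : ℕ}

theorem hasSubPoissonMGF_uStatistic (hX : ∀ i, Measurable (X i)) (hindep : iIndepFun X P)
    (hh : Measurable h) (hh01 : ∀ z, h z ∈ Set.Icc 0 1)
    (hmean : ∀ e : Fin r ↪ ι, ∫ ω, h (fun j ↦ X (e j) ω) ∂P = v) (hm : m * r ≤ Fintype.card ι) :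
    HasSubPoissonMGF (fun ω ↦ m * uStatistic h fun i ↦ X i ω) (m * v) P := by
  classical
  have := hindep.isProbabilityMeasure
  obtain ⟨c⟩ : Nonempty (Fin m × Fin r ↪ ι) :=
    Function.Embedding.nonempty_of_card_le (by simpa using hm)
  have hblock (σ : Equiv.Perm ι) (k : Fin m) :
      HasSubPoissonMGF (fun ω ↦ h fun j ↦ X (σ (c (k, j))) ω) v P := by
    rw [← hmean ((Function.Embedding.sectR k (Fin r)).trans (c.trans σ.toEmbedding))]
    exact hasSubPoissonMGF_of_mem_Icc (by fun_prop) (ae_of_all _ fun ω ↦ hh01 _)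
  have hblocks (σ : Equiv.Perm ι) :
      HasSubPoissonMGF (∑ k, fun ω ↦ h fun j ↦ X (σ (c (k, j))) ω) (m * v) P := by
    have hindep_blocks : iIndepFun (fun k ω ↦ h fun j ↦ X (σ (c (k, j))) ω) P :=
      (iIndepFun_curry (fun p ↦ hX (σ (c p)))
        (hindep.precomp (σ.injective.comp c.injective))).comp (fun _ ↦ h) fun _ ↦ hh
    simpa using HasSubPoissonMGF.sum_of_iIndepFun (hblock σ) hindep_blocks univ
  have haverage := HasSubPoissonMGF.expect univ_nonempty fun σ _ ↦ hblocks σ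
  convert! haverage using 2 with ω
  simpa using card_mul_uStatistic_eq_expect_sum h (fun i ↦ X i ω) c

theorem measureReal_lt_mul_sqrt_uStatistic_sub_sqrt_le (hX : ∀ i, Measurable (X i))
    (hindep : iIndepFun X P) (hh : Measurable h) (hhM : ∀ z, h z ∈ Set.Icc 0 M)
    (hmean : ∀ e : Fin r ↪ ι, ∫ ω, h (fun j ↦ X (e j) ω) ∂P = v) (hm : m * r ≤ Fintype.card ι)
    (hm0 : 0 < m) (hL : 0 ≤ L) {b : ℝ} (hb : b = 1 ∨ b = -1) :
    P.real {ω | √(M * L / m) < b * (√(uStatistic h fun i ↦ X i ω) - √v)} ≤ Real.exp (-L) := by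
  have := hindep.isProbabilityMeasure
  obtain ⟨e⟩ : Nonempty (Fin r ↪ ι) := Function.Embedding.nonempty_of_card_le <| by
    simpa using (Nat.le_mul_of_pos_left r hm0).trans hm
  obtain ⟨ω₀⟩ : Nonempty Ω := nonempty_of_isProbabilityMeasure P
  have hM : 0 ≤ M := (hhM fun j ↦ X (e j) ω₀).1.trans (hhM fun j ↦ X (e j) ω₀).2
  have hv : 0 ≤ v := hmean e ▸ integral_nonneg fun ω ↦ (hhM _).1
  rcases hM.eq_or_lt with rfl | hM
  · obtain rfl : h = 0 := funext fun z ↦ le_antisymm (hhM z).2 (hhM z).1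
    obtain rfl : v = 0 := by simpa using (hmean e).symm
    simpa [uStatistic] using Real.exp_nonneg (-L)
  have hpoisson := hasSubPoissonMGF_uStatistic (h := fun z ↦ M⁻¹ * h z) (v := M⁻¹ * v) hX hindep
    (hh.const_mul _)
    (fun z ↦ ⟨mul_nonneg (by positivity) (hhM z).1, (inv_mul_le_one₀ hM).2 (hhM z).2⟩)
    (fun e ↦ by rw [integral_const_mul, hmean]) hm
  simp only [uStatistic_const_mul, ← mul_assoc] at hpoisson
  have htail := hpoisson.measureReal_sqrt_div_lt_mul_sqrt_sub_sqrt_le (by positivity) hv hL hb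
  rwa [← div_div, div_inv_eq_mul, div_mul_eq_mul_div, mul_comm L] at htail

end UStatistic

section RKHSVariance

variable {𝒳 H : Type*} [NormedAddCommGroup H] {φ : 𝒳 → H}

/-- Half the squared RKHS distance of two points, the U-statistic kernel of the variance. It is a
function of a pair `Fin 2 → 𝒳`, as `uStatistic` expects. -/
def halfSqDist (φ : 𝒳 → H) (z : Fin 2 → 𝒳) : ℝ :=
  ‖φ (z 0) - φ (z 1)‖ ^ 2 / 2

theorem measurable_halfSqDist [MeasurableSpace 𝒳] (hφ : StronglyMeasurable φ) :
    Measurable (halfSqDist φ) :=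
  (((hφ.comp_measurable (measurable_pi_apply 0)).sub
    (hφ.comp_measurable (measurable_pi_apply 1))).norm.pow 2).measurable.div_const 2

variable [InnerProductSpace ℝ H]

theorem halfSqDist_eq_kerG (φ : 𝒳 → H) (z : Fin 2 → 𝒳) :
    halfSqDist φ z =
      (kerG φ (z 0) (z 0) + kerG φ (z 1) (z 1)) / 2 - kerG φ (z 0) (z 1) := by
  simp only [halfSqDist, kerG, norm_sub_sq_real, real_inner_self_eq_norm_sq]
  ring

theorem abs_kerG_le {C : ℝ} (hφ : ∀ x, ‖φ x‖ ≤ C) (x y : 𝒳) : |kerG φ x y| ≤ C ^ 2 :=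
  calc |kerG φ x y|
    _ ≤ ‖φ x‖ * ‖φ y‖ := abs_real_inner_le_norm _ _
    _ ≤ C * C := mul_le_mul (hφ x) (hφ y) (norm_nonneg _) ((norm_nonneg _).trans (hφ x))
    _ = C ^ 2 := (sq C).symm

theorem halfSqDist_mem_Icc (hφ : ∃ C, ∀ x, ‖φ x‖ ≤ C) (z : Fin 2 → 𝒳) :
    halfSqDist φ z ∈ Set.Icc 0 (kerRange φ) := by
  obtain ⟨C, hC⟩ := hφ
  have habove : BddAbove (Set.range fun p : 𝒳 × 𝒳 ↦ kerG φ p.1 p.2) :=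
    ⟨C ^ 2, Set.forall_mem_range.2 fun p ↦ (abs_le.1 (abs_kerG_le hC p.1 p.2)).2⟩
  have hbelow : BddBelow (Set.range fun p : 𝒳 × 𝒳 ↦ kerG φ p.1 p.2) :=
    ⟨-C ^ 2, Set.forall_mem_range.2 fun p ↦ (abs_le.1 (abs_kerG_le hC p.1 p.2)).1⟩
  refine ⟨by unfold halfSqDist; positivity, ?_⟩
  rw [halfSqDist_eq_kerG, kerRange]
  linarith [le_ciSup habove (z 0, z 0), le_ciSup habove (z 1, z 1), ciInf_le hbelow (z 0, z 1)]

theorem kerRange_nonneg (hφ : ∃ C, ∀ x, ‖φ x‖ ≤ C) : 0 ≤ kerRange φ := by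
  rcases isEmpty_or_nonempty 𝒳 with h𝒳 | ⟨⟨x⟩⟩
  · simp [kerRange]
  · exact Set.nonempty_Icc.1 ⟨_, halfSqDist_mem_Icc hφ fun _ ↦ x⟩

theorem expect_embedding_fin_two {ι : Type*} [Fintype ι] (f : ι → ι → ℝ) (hf : ∀ i, f i i = 0) :
    𝔼 e : Fin 2 ↪ ι, f (e 0) (e 1) =
      (∑ i, ∑ j, f i j) / (Fintype.card ι * (Fintype.card ι - 1)) := by
  have hsum : ∑ e : Fin 2 ↪ ι, f (e 0) (e 1) = ∑ i, ∑ j, f i j := by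
    rw [← Fintype.sum_prod_type' f]
    refine sum_of_injOn (fun e ↦ (e 0, e 1)) (fun e₁ _ e₂ _ h ↦ ?_)
      (fun _ _ ↦ mem_coe.2 (mem_univ _)) (fun p _ hp ↦ ?_) fun _ _ ↦ rfl
    · exact DFunLike.ext _ _ (Fin.forall_fin_two.2 (Prod.ext_iff.1 h))
    · have hdiag : p.1 = p.2 := by
        by_contra hne
        exact hp ⟨Function.Embedding.embFinTwo hne, mem_coe.2 (mem_univ _), rfl⟩
      rw [hdiag, hf]
  rw [Fintype.expect_eq_sum_div_card, hsum, Fintype.card_embedding_eq, Fintype.card_fin,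
    Nat.cast_descFactorial_two]

theorem sum_sum_halfSqDist {ι : Type*} [Fintype ι] (φ : 𝒳 → H) (x : ι → 𝒳) :
    ∑ i, ∑ j, halfSqDist φ ![x i, x j] =
      Fintype.card ι * ∑ i, kerG φ (x i) (x i) - ∑ i, ∑ j, kerG φ (x i) (x j) := by
  simp only [halfSqDist_eq_kerG, Matrix.cons_val_zero, Matrix.cons_val_one, sum_sub_distrib,
    ← sum_div, sum_add_distrib, sum_const, card_univ, nsmul_eq_mul, ← mul_sum]
  ring

theorem empVar_eq_uStatistic (φ : 𝒳 → H) (n : ℕ) (x : ℕ → 𝒳) :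
    empVar φ n x = uStatistic (halfSqDist φ) fun i : Fin n ↦ x i := by
  rcases n.eq_zero_or_pos with rfl | hn
  · simp [empVar, uStatistic]
  have hU := expect_embedding_fin_two (fun i j : Fin n ↦ halfSqDist φ ![x i, x j])
    fun i ↦ by simp [halfSqDist]
  rw [sum_sum_halfSqDist φ fun i : Fin n ↦ x i, Fintype.card_fin] at hU
  refine Eq.trans ?_ hU.symm
  simp only [empVar, ← Fin.sum_univ_eq_sum_range, sum_sub_distrib, ← mul_sum]
  field_simp

variable [MeasurableSpace 𝒳] [CompleteSpace H]

theorem integral_norm_sub_sq {ν : Measure 𝒳} [IsProbabilityMeasure ν] (hφ : MemLp φ 2 ν) (a : H) :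
    ∫ x, ‖φ x - a‖ ^ 2 ∂ν = Vstar φ ν + ‖KME φ ν - a‖ ^ 2 := by
  set μ := KME φ ν
  have hint : Integrable φ ν := hφ.integrable (by norm_num)
  have hcenter : Integrable (fun x ↦ φ x - μ) ν := hint.sub (integrable_const μ)
  have hcenter_sq : Integrable (fun x ↦ ‖φ x - μ‖ ^ 2) ν :=
    (hφ.sub (memLp_const μ)).integrable_norm_pow (by norm_num)
  have hcross_int : Integrable (fun x ↦ 2 * inner ℝ (μ - a) (φ x - μ)) ν :=
    (hcenter.const_inner _).const_mul 2
  have hcross : ∫ x, 2 * inner ℝ (μ - a) (φ x - μ) ∂ν = 0 := by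
    rw [integral_const_mul, integral_inner hcenter, integral_sub hint (integrable_const μ)]
    simp [μ, KME]
  have hexpand (x : 𝒳) :
      ‖φ x - a‖ ^ 2 = ‖φ x - μ‖ ^ 2 + 2 * inner ℝ (μ - a) (φ x - μ) + ‖μ - a‖ ^ 2 := by
    rw [← sub_add_sub_cancel (φ x) μ a, norm_add_sq_real, real_inner_comm]
  simp only [hexpand]
  rw [integral_add (by exact hcenter_sq.add hcross_int) (integrable_const _),
    integral_add hcenter_sq hcross_int, hcross, integral_const, probReal_univ, one_smul, add_zero,
    Vstar]

theorem integral_prod_norm_sub_sq {ν : Measure 𝒳} [IsProbabilityMeasure ν] (hφ : MemLp φ 2 ν) :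
    ∫ p : 𝒳 × 𝒳, ‖φ p.1 - φ p.2‖ ^ 2 ∂(ν.prod ν) = 2 * Vstar φ ν := by
  have hint : Integrable (fun p : 𝒳 × 𝒳 ↦ ‖φ p.1 - φ p.2‖ ^ 2) (ν.prod ν) :=
    ((hφ.comp_fst ν).sub (hφ.comp_snd ν)).integrable_norm_pow (by norm_num)
  have hcenter_sq : Integrable (fun x ↦ ‖φ x - KME φ ν‖ ^ 2) ν :=
    (hφ.sub (memLp_const _)).integrable_norm_pow (by norm_num)
  calc ∫ p : 𝒳 × 𝒳, ‖φ p.1 - φ p.2‖ ^ 2 ∂(ν.prod ν)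
    _ = ∫ y, ∫ x, ‖φ x - φ y‖ ^ 2 ∂ν ∂ν := integral_prod_symm _ hint
    _ = ∫ y, (Vstar φ ν + ‖φ y - KME φ ν‖ ^ 2) ∂ν := by
      simp only [integral_norm_sub_sq hφ, norm_sub_rev (KME φ ν)]
    _ = 2 * Vstar φ ν := by
      rw [integral_add (integrable_const _) hcenter_sq, integral_const, probReal_univ, one_smul,
        two_mul, Vstar]

theorem integral_halfSqDist {Ω : Type*} [MeasurableSpace Ω] {P : Measure Ω}
    [IsProbabilityMeasure P] {ν : Measure 𝒳} {Z : Fin 2 → Ω → 𝒳} (hφ : MemLp φ 2 ν)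
    (hZ : ∀ j, Measurable (Z j)) (hlaw : ∀ j, P.map (Z j) = ν) (hindep : IndepFun (Z 0) (Z 1) P) :
    ∫ ω, halfSqDist φ (fun j ↦ Z j ω) ∂P = Vstar φ ν := by
  have : IsProbabilityMeasure ν := hlaw 0 ▸ Measure.isProbabilityMeasure_map (hZ 0).aemeasurable
  have hpair : P.map (fun ω ↦ (Z 0 ω, Z 1 ω)) = ν.prod ν := by
    rw [hindep.map_prod_eq_prod_map_map (hZ 0).aemeasurable (hZ 1).aemeasurable, hlaw, hlaw]
  have hmeas : AEStronglyMeasurable (fun p : 𝒳 × 𝒳 ↦ ‖φ p.1 - φ p.2‖ ^ 2) (ν.prod ν) :=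
    ((hφ.comp_fst ν).sub (hφ.comp_snd ν)).1.norm.pow 2
  calc ∫ ω, halfSqDist φ (fun j ↦ Z j ω) ∂P
    _ = (∫ ω, ‖φ (Z 0 ω) - φ (Z 1 ω)‖ ^ 2 ∂P) / 2 := integral_div ..
    _ = (∫ p : 𝒳 × 𝒳, ‖φ p.1 - φ p.2‖ ^ 2 ∂(ν.prod ν)) / 2 := by
      rw [← hpair, integral_map ((hZ 0).prodMk (hZ 1)).aemeasurable (hpair ▸ hmeas)]
    _ = Vstar φ ν := by
      rw [integral_prod_norm_sub_sq hφ, mul_div_cancel_left₀ _ two_ne_zero]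

theorem measureReal_lt_mul_sqrt_empVar_sub_sqrt_Vstar_le {Ω : Type*} [MeasurableSpace Ω]
    {P : Measure Ω} {ν : Measure 𝒳} {n : ℕ} {X : ℕ → Ω → 𝒳} {L b : ℝ}
    (hφ : StronglyMeasurable φ) (hφbdd : ∃ C, ∀ x, ‖φ x‖ ≤ C) (hX : ∀ t, Measurable (X t))
    (hlaw : ∀ t, P.map (X t) = ν) (hindep : iIndepFun X P) (hn : 2 ≤ n) (hL : 0 ≤ L)
    (hb : b = 1 ∨ b = -1) :
    P.real {ω | √(kerRange φ * L / (n / 2 : ℕ)) <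
      b * (√(empVar φ n fun t ↦ X t ω) - √(Vstar φ ν))} ≤ Real.exp (-L) := by
  have := hindep.isProbabilityMeasure
  have : IsProbabilityMeasure ν := hlaw 0 ▸ Measure.isProbabilityMeasure_map (hX 0).aemeasurable
  have hφ2 : MemLp φ 2 ν :=
    let ⟨C, hC⟩ := hφbdd
    .of_bound hφ.aestronglyMeasurable C (ae_of_all _ hC)
  have hmean (e : Fin 2 ↪ Fin n) : ∫ ω, halfSqDist φ (fun j ↦ X (e j) ω) ∂P = Vstar φ ν :=
    integral_halfSqDist hφ2 (fun j ↦ hX (e j)) (fun j ↦ hlaw (e j))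
      (hindep.indepFun (Fin.val_injective.ne (e.injective.ne Fin.zero_ne_one)))
  simp only [empVar_eq_uStatistic]
  exact measureReal_lt_mul_sqrt_uStatistic_sub_sqrt_le (X := fun i : Fin n ↦ X i)
    (fun i ↦ hX i) (hindep.precomp Fin.val_injective) (measurable_halfSqDist hφ)
    (halfSqDist_mem_Icc hφbdd) hmean (by simpa using Nat.div_mul_le_self n 2)
    (Nat.div_pos hn two_pos) hL hb

end RKHSVariance

theorem ofReal_one_sub_le_measure_of_measureReal_compl_le {Ω : Type*} [MeasurableSpace Ω]
    {P : Measure Ω} [IsProbabilityMeasure P] {A : Set Ω} {δ : ℝ} (hA : P.real Aᶜ ≤ δ) :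
    ENNReal.ofReal (1 - δ) ≤ P A := by
  have hcover : 1 ≤ P.real A + P.real Aᶜ := by
    simpa only [Set.union_compl_self, probReal_univ] using measureReal_union_le (μ := P) A Aᶜ
  exact ENNReal.ofReal_le_of_le_toReal (by rw [← measureReal_def]; linarith)

theorem sqrt_div_half_le {a : ℝ} (ha : 0 ≤ a) {n : ℕ} (hn : 2 ≤ n) :
    √(a / (n / 2 : ℕ)) ≤ 2 * √(2 * a / n) := by
  have hhalf : 0 < n / 2 := Nat.div_pos hn two_pos
  have hn_le : (n : ℝ) ≤ 8 * (n / 2 : ℕ) := by exact_mod_cast (by lia : n ≤ 8 * (n / 2))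
  rw [← Real.sqrt_sq zero_le_two, ← Real.sqrt_mul (by positivity)]
  refine Real.sqrt_le_sqrt ?_
  rw [← mul_div_assoc, div_le_div_iff₀ (by positivity) (by positivity)]
  nlinarith

theorem empirical_RKHS_stddev_concentration_general
    {𝒳 H Ω : Type*} [MeasurableSpace 𝒳]
    [NormedAddCommGroup H] [InnerProductSpace ℝ H] [CompleteSpace H] [MeasurableSpace Ω]
    (P : Measure Ω) [IsProbabilityMeasure P]
    (φ : 𝒳 → H) (hφmeas : StronglyMeasurable φ) (hφbdd : ∃ C : ℝ, ∀ x : 𝒳, ‖φ x‖ ≤ C)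
    (ν : Measure 𝒳) (n : ℕ) (hn : 2 ≤ n)
    (X : ℕ → Ω → 𝒳) (hXmeas : ∀ t, Measurable (X t))
    (hXlaw : ∀ t, Measure.map (X t) P = ν)
    (hXindep : iIndepFun X P)
    (b : ℝ) (hb : b = 1 ∨ b = -1)
    (δ : ℝ) (hδ0 : 0 < δ) (hδ1 : δ ≤ 1) :
    ENNReal.ofReal (1 - δ) ≤
      P {ω | b * (Real.sqrt (empVar φ n (fun t => X t ω)) - Real.sqrt (Vstar φ ν))
          ≤ 2 * Real.sqrt (2 * kerRange φ * Real.log (1 / δ) / n)} := by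
  have hlog : 0 ≤ Real.log (1 / δ) := Real.log_nonneg (one_le_one_div hδ0 hδ1)
  have hradius := sqrt_div_half_le (mul_nonneg (kerRange_nonneg hφbdd) hlog) hn
  rw [← mul_assoc] at hradius
  refine ofReal_one_sub_le_measure_of_measureReal_compl_le ?_
  calc P.real _
    _ ≤ P.real {ω | √(kerRange φ * Real.log (1 / δ) / (n / 2 : ℕ)) <
          b * (√(empVar φ n fun t ↦ X t ω) - √(Vstar φ ν))} :=
      measureReal_mono fun ω hω ↦ hradius.trans_lt (not_le.1 hω)
    _ ≤ Real.exp (-Real.log (1 / δ)) :=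
      measureReal_lt_mul_sqrt_empVar_sub_sqrt_Vstar_le hφmeas hφbdd hXmeas hXlaw hXindep hn hlog hb
    _ = δ := by rw [one_div, Real.log_inv, neg_neg, Real.exp_log hδ0]

/-- (Lemma A.6: concentration of the empirical RKHS standard deviation.) For i.i.d.
samples `X_1,…,X_n ∼ ν`, for each sign `b ∈ {−1, +1}` and every `δ ∈ (0,1]`, with
probability at least `1 − δ`, `b (√𝒱̂ − √𝒱*) ≤ 2 √(2 g̃ log(1/δ)/n)`. -/
theorem empirical_RKHS_stddev_concentration
    {𝒳 H Ω : Type*} [MeasurableSpace 𝒳] [AddCommGroup 𝒳]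
    [NormedAddCommGroup H] [InnerProductSpace ℝ H] [CompleteSpace H]
    [SecondCountableTopology H] [MeasurableSpace H] [BorelSpace H] [MeasurableSpace Ω]
    (P : Measure Ω) [IsProbabilityMeasure P]
    (φ : 𝒳 → H) (hφmeas : Measurable φ) (hφbdd : ∃ C : ℝ, ∀ x : 𝒳, ‖φ x‖ ≤ C)
    (hTI : ∃ Ψ : 𝒳 → ℝ, ∀ x y : 𝒳, kerG φ x y = Ψ (x - y))
    (ν : Measure 𝒳) [IsProbabilityMeasure ν]
    (n : ℕ) (hn : 2 ≤ n)
    (X : ℕ → Ω → 𝒳) (hXmeas : ∀ t, Measurable (X t))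
    (hXlaw : ∀ t, Measure.map (X t) P = ν)
    (hXindep : iIndepFun X P)
    (b : ℝ) (hb : b = 1 ∨ b = -1)
    (δ : ℝ) (hδ0 : 0 < δ) (hδ1 : δ ≤ 1) :
    ENNReal.ofReal (1 - δ) ≤
      P {ω | b * (Real.sqrt (empVar φ n (fun t => X t ω)) - Real.sqrt (Vstar φ ν))
          ≤ 2 * Real.sqrt (2 * kerRange φ * Real.log (1 / δ) / n)} := by
  exact empirical_RKHS_stddev_concentration_general P φ hφmeas.stronglyMeasurable hφbdd ν n hn X
    hXmeas hXlaw hXindep b hb δ hδ0 hδ1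

end
end
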